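/- Let 0 ≤ s ≤ 1 and h = π/N ∈ (0,1]. There is a constant C, independent of h, such that: (1) for every f : 𝕋_h → ℝ, ‖P_{≥π/h} 𝓛_h f‖_{L²(𝕋)} ≤ C·h^s·‖f‖_{H^s(𝕋_h)}; and (2) for every g ∈ H^s(𝕋), ‖P_{≥π/h} g‖_{L²(𝕋)} ≤ C·h^s·‖g‖_{H^s(𝕋)}. -/

import Mathlib

/-!
On frequencies `|k| ≥ N = π / h` one has `h|k| ≥ π ≥ 1`, so `1 ≤ h^{2s} (1 + k²)^s`; this is the
bound for `g` on `𝕋`, with constant `1`.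

For the interpolation, integrating `𝓛_h f` against `e^{-ikx}` cell by cell and summing by parts over
the periodic lattice gives, for `k ≠ 0`, the Fejér-type identity
`𝓕(𝓛_h f)(k) = (2 - 2 cos (hk)) / (hk)² · 𝓕_h f(k)` (`tF_interp`). Both `𝓕_h f` and `cos (h ·)` are
`2N`-periodic in `k`, so writing `k = j + 2Nm` with `j` in the dual lattice, the numerator is
`2 - 2 cos (hj) ≤ min (4, (hj)²)`, hence `(2 - 2 cos (hj))² ≤ 16 h^{2s} (1 + j²)^s` (`symb_bound`).
The denominator is at least `(π max(1, |m|))²` when `|k| ≥ N`, which makes the sum over the aliases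
`m` converge (`interp_bound`).
-/


open scoped Real BigOperators ENNReal NNReal
open MeasureTheory

noncomputable section

namespace FPU

/-- `e^{ix}`. -/
def eI (x : ℝ) : ℂ := Complex.exp (Complex.I * x)

/-- Mesh size `h = π / N`. -/
def msh (N : ℕ) : ℝ := Real.pi / N

/-- Frequency/index set `{-N, …, N-1}` of `𝕋_h` (identified with `(𝕋_h)*`). -/
def dual (N : ℕ) : Finset ℤ := Finset.Icc (-(N : ℤ)) ((N : ℤ) - 1)

/-- Reduction of an integer into `{-N, …, N-1}` modulo `2N`. -/
def red (N : ℕ) (m : ℤ) : ℤ := (m + N) % (2 * N) - N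

/-- Complexification of a real lattice function. -/
def cf (f : ℤ → ℝ) : ℤ → ℂ := fun n => (f n : ℂ)

/-- Discrete Fourier coefficient `𝓕_h f (k)` on `𝕋_h`. -/
def dF (N : ℕ) (f : ℤ → ℂ) (k : ℤ) : ℂ :=
  ((msh N / Real.sqrt (2 * Real.pi) : ℝ) : ℂ) *
    ∑ n ∈ dual N, f n * eI (-(msh N * n * k))

/-- `L²(𝕋_h)` norm. -/
def L2h (N : ℕ) (f : ℤ → ℂ) : ℝ :=
  Real.sqrt (msh N * ∑ n ∈ dual N, ‖f n‖ ^ 2)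

/-- `H^s(𝕋_h)` norm. -/
def Hs (N : ℕ) (s : ℝ) (f : ℤ → ℂ) : ℝ :=
  Real.sqrt (∑ k ∈ dual N, (1 + (k : ℝ) ^ 2) ^ s * ‖dF N f k‖ ^ 2)

/-- `ℍ^s(𝕋_h)` norm of a pair. -/
def HsPair (N : ℕ) (s : ℝ) (f g : ℤ → ℂ) : ℝ :=
  Real.sqrt (Hs N s f ^ 2 + Hs N s g ^ 2)

/-- Fourier multiplier on `𝕋_h` with symbol `m`. -/
def mult (N : ℕ) (m : ℤ → ℂ) (f : ℤ → ℂ) : ℤ → ℂ := fun n =>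
  ((1 / Real.sqrt (2 * Real.pi) : ℝ) : ℂ) *
    ∑ k ∈ dual N, m k * dF N f k * eI (msh N * n * k)

/-- Symbol of `∇_h`. -/
def gradSymb (N : ℕ) (k : ℤ) : ℂ :=
  2 * Complex.I / ((msh N : ℝ) : ℂ) * ((Real.sin (msh N * k / 2) : ℝ) : ℂ)

/-- `∇_h`. -/
def gradh (N : ℕ) : (ℤ → ℂ) → ℤ → ℂ := mult N (gradSymb N)

/-- `∇_h⁻¹` (vanishing at frequency `0`). -/
def gradhInv (N : ℕ) : (ℤ → ℂ) → ℤ → ℂ :=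
  mult N fun k => if k = 0 then 0 else (gradSymb N k)⁻¹

/-- The FPU dispersion `s_h(k) = (1/h²)(k - (2/h)sin(hk/2))`. -/
def sh (N : ℕ) (k : ℤ) : ℝ :=
  (1 / msh N ^ 2) * (k - (2 / msh N) * Real.sin (msh N * k / 2))

/-- Linear FPU propagator `S_h^σ(t)`, the multiplier with symbol `e^{iσt·s_h(k)}`. -/
def Sh (N : ℕ) (σ t : ℝ) : (ℤ → ℂ) → ℤ → ℂ :=
  mult N fun k => eI (σ * t * sh N k)

/-- `e^{σc∂_h}`, the multiplier with symbol `e^{iσck}`. -/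
def expDh (N : ℕ) (c : ℝ) : (ℤ → ℂ) → ℤ → ℂ :=
  mult N fun k => eI (c * k)

/-- Coupled FPU integral equation (component with sign `σ`, the other component is `w`). -/
def coupledEq (N : ℕ) (σ T : ℝ) (u0 : ℤ → ℂ) (u w : ℝ → ℤ → ℂ) : Prop :=
  ∀ t ∈ Set.Icc (-T) T, ∀ n : ℤ,
    u t n = Sh N σ t u0 n - (σ : ℂ) / 4 *
      ∫ t' in (0:ℝ)..t,
        Sh N σ (t - t')
          (gradh N (fun m =>
            (u t' m + expDh N (σ * (2 * t' / msh N ^ 2)) (w t') m) ^ 2)) n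

/-- Decoupled FPU integral equation with sign `σ`. -/
def decoupledEq (N : ℕ) (σ T : ℝ) (u0 : ℤ → ℂ) (v : ℝ → ℤ → ℂ) : Prop :=
  ∀ t ∈ Set.Icc (-T) T, ∀ n : ℤ,
    v t n = Sh N σ t u0 n - (σ : ℂ) / 4 *
      ∫ t' in (0:ℝ)..t, Sh N σ (t - t') (gradh N (fun m => (v t' m) ^ 2)) n

/-- Fourier coefficient on `𝕋 = ℝ/2πℤ`. -/
def tF (f : ℝ → ℂ) (k : ℤ) : ℂ :=
  ((1 / Real.sqrt (2 * Real.pi) : ℝ) : ℂ) *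
    ∫ x in (-Real.pi)..Real.pi, f x * eI (-(x * k))

/-- Fourier multiplier on `𝕋`. -/
def tmult (m : ℤ → ℂ) (f : ℝ → ℂ) : ℝ → ℂ := fun x =>
  ((1 / Real.sqrt (2 * Real.pi) : ℝ) : ℂ) * ∑' k : ℤ, m k * tF f k * eI (x * k)

/-- Airy propagator `S^σ(t)`, multiplier with symbol `e^{iσtk³/24}`. -/
def airy (σ t : ℝ) : (ℝ → ℂ) → ℝ → ℂ :=
  tmult fun k => eI (σ * t * (k : ℝ) ^ 3 / 24)

/-- `∂_x` as a Fourier multiplier on `𝕋`. -/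
def tderiv : (ℝ → ℂ) → ℝ → ℂ := tmult fun k => Complex.I * (k : ℂ)

/-- `L²(𝕋)` norm (computed on the Fourier side). -/
def L2T (f : ℝ → ℂ) : ℝ≥0∞ :=
  (∑' k : ℤ, ENNReal.ofReal (‖tF f k‖ ^ 2)) ^ (1/2 : ℝ)

/-- `H^s(𝕋)` norm. -/
def HsT (s : ℝ) (f : ℝ → ℂ) : ℝ≥0∞ :=
  (∑' k : ℤ, ENNReal.ofReal ((1 + (k : ℝ) ^ 2) ^ s * ‖tF f k‖ ^ 2)) ^ (1/2 : ℝ)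

/-- `L²(𝕋)` norm of the sharp frequency projection onto the set `K`. -/
def L2Tproj (K : Set ℤ) (f : ℝ → ℂ) : ℝ≥0∞ :=
  (∑' k : ℤ, ENNReal.ofReal (K.indicator (fun j => ‖tF f j‖ ^ 2) k)) ^ (1/2 : ℝ)

/-- Linear interpolation `𝓛_h` of a lattice function, as a function on `𝕋` (2π-periodic). -/
def interp (N : ℕ) (f : ℤ → ℂ) : ℝ → ℂ := fun x =>
  f (red N ⌊x / msh N⌋) +
    (f (red N (⌊x / msh N⌋ + 1)) - f (red N ⌊x / msh N⌋)) *
      (((x - msh N * ⌊x / msh N⌋) / msh N : ℝ) : ℂ)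

/-- KdV integral equation with sign `σ`. -/
def kdvEq (σ T : ℝ) (w0 : ℝ → ℂ) (w : ℝ → ℝ → ℂ) : Prop :=
  ∀ t ∈ Set.Icc (-T) T, ∀ x : ℝ,
    w t x = airy σ t w0 x - (σ : ℂ) / 4 *
      ∫ t' in (0:ℝ)..t, airy σ (t - t') (tderiv (fun y => (w t' y) ^ 2)) x

/-- Continuity in `H^s(𝕋)` on `[-T,T]`, together with membership in `H^s`. -/
def contHsT (s T : ℝ) (w : ℝ → ℝ → ℂ) : Prop :=
  ∀ t₀ ∈ Set.Icc (-T) T, HsT s (w t₀) < ⊤ ∧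
    ∀ ε : ℝ, 0 < ε → ∃ δ : ℝ, 0 < δ ∧ ∀ t ∈ Set.Icc (-T) T,
      |t - t₀| < δ → HsT s (fun x => w t x - w t₀ x) < ENNReal.ofReal ε

/-- Japanese bracket `⟨x⟩`. -/
def jap (x : ℝ) : ℝ := Real.sqrt (1 + x ^ 2)

/-- Space-time Fourier transform on `ℝ × 𝕋_h`. -/
def stF (N : ℕ) (u : ℝ → ℤ → ℂ) (τ : ℝ) (k : ℤ) : ℂ :=
  ((msh N / (2 * Real.pi) : ℝ) : ℂ) *
    ∑ n ∈ dual N, ∫ t : ℝ, eI (-(t * τ)) * eI (-(msh N * n * k)) * u t n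

/-- Bourgain norm `X^{s,b}_{h,σ}` (with sign `σ = ±1`). -/
def Xnorm (N : ℕ) (σ s b : ℝ) (u : ℝ → ℤ → ℂ) : ℝ≥0∞ :=
  (∑ k ∈ dual N, ∫⁻ τ : ℝ, ENNReal.ofReal
      (jap (k : ℝ) ^ (2 * s) * jap (τ - σ * sh N k) ^ (2 * b) * ‖stF N u τ k‖ ^ 2)) ^ (1/2 : ℝ)

/-- `Z^s_{h,σ}` norm. -/
def Znorm (N : ℕ) (σ s : ℝ) (u : ℝ → ℤ → ℂ) : ℝ≥0∞ :=
  Xnorm N σ s (-(1/2)) u +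
    (∑ k ∈ dual N, (∫⁻ τ : ℝ, ENNReal.ofReal
        (jap (k : ℝ) ^ s * (jap (τ - σ * sh N k))⁻¹ * ‖stF N u τ k‖)) ^ 2) ^ (1/2 : ℝ)

/-- `Y^s_{h,σ}` norm. -/
def Ynorm (N : ℕ) (σ s : ℝ) (u : ℝ → ℤ → ℂ) : ℝ≥0∞ :=
  Xnorm N σ s (1/2) u +
    (∑ k ∈ dual N, (∫⁻ τ : ℝ, ENNReal.ofReal
        (jap (k : ℝ) ^ s * ‖stF N u τ k‖)) ^ 2) ^ (1/2 : ℝ)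

/-- Time restricted norm `Y^{s,T}_{h,σ}` (infimum over extensions). -/
def YnormT (N : ℕ) (σ s T : ℝ) (u : ℝ → ℤ → ℂ) : ℝ≥0∞ :=
  ⨅ g : {g : ℝ → ℤ → ℂ // ∀ t ∈ Set.Icc (-T) T, ∀ n : ℤ, g t n = u t n},
    Ynorm N σ s g.1

/-- `L⁴(ℝ × 𝕋_h)` norm. -/
def L4st (N : ℕ) (u : ℝ → ℤ → ℂ) : ℝ≥0∞ :=
  (∫⁻ t : ℝ, ENNReal.ofReal (msh N * ∑ n ∈ dual N, ‖u t n‖ ^ 4)) ^ (1/4 : ℝ)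

/-- KdV resonance `Ψ²(k,k₁,k₂) = -(1/8)kk₁k₂`. -/
def Psi2 (k k₁ k₂ : ℤ) : ℝ := -(1/8 : ℝ) * (k : ℝ) * (k₁ : ℝ) * (k₂ : ℝ)

/-- KdV cubic resonance `Ψ³ = -(1/8)(a+b)(b+c)(a+c)`. -/
def Psi3 (a b c : ℤ) : ℝ :=
  -(1/8 : ℝ) * (((a + b : ℤ) : ℝ) * ((b + c : ℤ) : ℝ) * ((a + c : ℤ) : ℝ))

/-- KdV quartic resonance. -/
def Psi4 (k₁ k₂ k₃ k₄ : ℤ) : ℝ := Psi3 (k₁ + k₂) k₃ k₄ + Psi2 (k₁ + k₂) k₁ k₂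

/-- FPU resonance `Φ_h²`. -/
def Phi2 (h : ℝ) (k k₁ k₂ : ℤ) : ℝ :=
  -(8 / h ^ 3) *
    (Real.sin (h * k₁ / 4) * Real.sin (h * k₂ / 4) * Real.sin (h * k / 4))

/-- FPU cubic resonance `Φ_h³`. -/
def Phi3 (h : ℝ) (a b c : ℤ) : ℝ :=
  -(8 / h ^ 3) *
    (Real.sin (h * (a + b) / 4) * Real.sin (h * (b + c) / 4) * Real.sin (h * (a + c) / 4))

/-- FPU quartic resonance `Φ_h⁴`. -/
def Phi4 (h : ℝ) (k₁ k₂ k₃ k₄ : ℤ) : ℝ :=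
  Phi3 h (k₁ + k₂) k₃ k₄ + Phi2 h (k₁ + k₂) k₁ k₂

/-- Decoupled FPU profile equation in Fourier variables (sign `σ`), on the time set `I`. -/
def fpuProfileEq (N : ℕ) (σ : ℝ) (u0 : ℤ → ℂ) (V : ℝ → ℤ → ℂ) (I : Set ℝ) : Prop :=
  ∀ t ∈ I, ∀ k ∈ dual N,
    dF N (V t) k = dF N u0 k -
      (σ : ℂ) * Complex.I / (2 * ((msh N : ℝ) : ℂ)) * ((Real.sin (msh N * k / 2) : ℝ) : ℂ) *
        ∫ t' in (0:ℝ)..t,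
          ∑ k₁ ∈ dual N,
            (if k₁ ≠ 0 ∧ k - k₁ ≠ 0 ∧ k - k₁ ∈ dual N then
              eI (σ * t' * Phi2 (msh N) k k₁ (k - k₁)) * dF N (V t') k₁ * dF N (V t') (k - k₁)
            else 0)

/-- KdV profile equation in Fourier variables (sign `σ`), on the time set `I`;
`W t k` denotes the `k`-th Fourier coefficient of the profile at time `t`. -/
def kdvProfileEq (σ : ℝ) (w0 : ℤ → ℂ) (W : ℝ → ℤ → ℂ) (I : Set ℝ) : Prop :=
  ∀ t ∈ I, ∀ k : ℤ,
    W t k = w0 k -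
      (σ : ℂ) * Complex.I * (k : ℂ) / 4 *
        ∫ t' in (0:ℝ)..t,
          ∑' k₁ : ℤ,
            (if k₁ ≠ 0 ∧ k - k₁ ≠ 0 then
              eI (σ * t' * Psi2 k k₁ (k - k₁)) * W t' k₁ * W t' (k - k₁)
            else 0)

/-- `H^s(𝕋)` norm of a Fourier coefficient sequence (extended-real valued). -/
def HsSeq (s : ℝ) (a : ℤ → ℂ) : ℝ≥0∞ :=
  (∑' k : ℤ, ENNReal.ofReal ((1 + (k : ℝ) ^ 2) ^ s * ‖a k‖ ^ 2)) ^ (1/2 : ℝ)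

/-- `H^s(𝕋)` norm of a Fourier coefficient sequence (real valued). -/
def HsSeqR (s : ℝ) (a : ℤ → ℂ) : ℝ :=
  Real.sqrt (∑' k : ℤ, (1 + (k : ℝ) ^ 2) ^ s * ‖a k‖ ^ 2)

/-- `ℓ²(ℤ)` norm of a Fourier coefficient sequence. -/
def l2R (a : ℤ → ℂ) : ℝ := Real.sqrt (∑' k : ℤ, ‖a k‖ ^ 2)

/-- `ℓ²` norm of the projection of a coefficient sequence to the frequency set `K`. -/
def l2projR (K : Set ℤ) (a : ℤ → ℂ) : ℝ :=
  Real.sqrt (∑' k : ℤ, K.indicator (fun j => ‖a j‖ ^ 2) k)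

/-- Periodic discrete Laplacian `Δ_h` on real lattice functions. -/
def lapR (N : ℕ) (f : ℤ → ℝ) (n : ℤ) : ℝ :=
  (f (red N (n + 1)) + f (red N (n - 1)) - 2 * f n) / msh N ^ 2

/-! ### Elementary facts about `eI`, the mesh and the reduction -/

lemma eI_add (x y : ℝ) : eI (x + y) = eI x * eI y := by
  simp [eI, ← Complex.exp_add, mul_add]

lemma eI_int (m : ℤ) : eI (2 * π * m) = 1 := by
  rw [eI, Complex.exp_eq_one_iff]
  exact ⟨m, by push_cast; ring⟩

lemma msh_pos {N : ℕ} (hN : 1 ≤ N) : 0 < msh N := by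
  unfold msh
  have : (0 : ℝ) < N := by exact_mod_cast hN
  positivity

lemma msh_mul {N : ℕ} (hN : 1 ≤ N) : msh N * N = π := by
  have : (N : ℝ) ≠ 0 := by positivity
  unfold msh
  field_simp

lemma red_mem {N : ℕ} (hN : 1 ≤ N) (k : ℤ) : red N k ∈ dual N := by
  have h1 := Int.emod_nonneg (k + N) (show (2 * N : ℤ) ≠ 0 by omega)
  have h2 := Int.emod_lt_of_pos (k + N) (show (0 : ℤ) < 2 * N by omega)
  simp only [dual, red, Finset.mem_Icc]
  omega

lemma red_of_mem {N : ℕ} {n : ℤ} (hn : n ∈ dual N) : red N n = n := by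
  simp only [dual, Finset.mem_Icc] at hn
  rw [red, Int.emod_eq_of_lt (by omega) (by omega)]
  ring

lemma red_add (N : ℕ) (n : ℤ) : red N (n + 2 * N) = red N n := by
  unfold red
  rw [show n + 2 * (N : ℤ) + N = n + N + 2 * N by ring, Int.add_emod_right]

lemma red_decomp (N : ℕ) (k : ℤ) : k = red N k + 2 * N * ((k + N) / (2 * N)) := by
  have := Int.emod_add_mul_ediv (k + N) (2 * N)
  unfold red
  linarith

/-- The discrete Fourier coefficient is `2N`-periodic in the frequency. -/
lemma dF_red {N : ℕ} (hN : 1 ≤ N) (f : ℤ → ℂ) (k : ℤ) : dF N f k = dF N f (red N k) := by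
  unfold dF
  congr 1
  refine Finset.sum_congr rfl fun n _ => ?_
  congr 1
  set m := (k + N) / (2 * N) with hm
  have hk : (k : ℝ) = red N k + 2 * N * m := by exact_mod_cast red_decomp N k
  have : -(msh N * n * k) = -(msh N * n * red N k) + 2 * π * ((-(n * m) : ℤ) : ℝ) := by
    rw [hk, ← msh_mul hN]; push_cast; ring
  rw [this, eI_add, eI_int, mul_one]

lemma cos_red {N : ℕ} (hN : 1 ≤ N) (k : ℤ) :
    Real.cos (msh N * k) = Real.cos (msh N * red N k) := by
  set m := (k + N) / (2 * N) with hm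
  have hk : (k : ℝ) = red N k + 2 * N * m := by exact_mod_cast red_decomp N k
  have : msh N * k = msh N * red N k + m * (2 * π) := by
    rw [hk, ← msh_mul hN]; ring
  rw [this, Real.cos_add_int_mul_two_pi]

/-! ### Fourier coefficients of the interpolation -/

lemma hasDerivAt_eI (k x : ℝ) :
    HasDerivAt (fun x : ℝ => eI (-(x * k))) (-(Complex.I * k) * eI (-(x * k))) x := by
  have h1 : HasDerivAt (fun x : ℝ => Complex.I * ((-(x * k) : ℝ) : ℂ))
      (Complex.I * ((-(1 * k) : ℝ) : ℂ)) x :=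
    (((hasDerivAt_id x).mul_const k).neg.ofReal_comp).const_mul _
  have h2 := h1.cexp
  unfold eI
  convert h2 using 1
  push_cast
  ring

lemma continuous_eI_mul (k : ℝ) : Continuous fun x : ℝ => eI (-(x * k)) := by
  unfold eI
  fun_prop

/-- Fourier integral of an affine function over one mesh cell, by an explicit primitive. -/
lemma cell_integral {h k : ℝ} (hh : h ≠ 0) (hk : k ≠ 0) (c : ℝ) (a b : ℂ) :
    ∫ x in c..(c + h), (a + (b - a) * (((x - c) / h : ℝ) : ℂ)) * eI (-(x * k)) =
      Complex.I / k * (b * eI (-((c + h) * k)) - a * eI (-(c * k))) +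
        (b - a) / (h * k ^ 2) * (eI (-((c + h) * k)) - eI (-(c * k))) := by
  have hh' : (h : ℂ) ≠ 0 := by exact_mod_cast hh
  have hk' : (k : ℂ) ≠ 0 := by exact_mod_cast hk
  have hI := Complex.I_sq
  have hd : ∀ x ∈ Set.uIcc c (c + h), HasDerivAt
      (fun x : ℝ => ((a + (b - a) * (((x - c) / h : ℝ) : ℂ)) * (Complex.I / k) +
        (b - a) / (h * k ^ 2)) * eI (-(x * k)))
      ((a + (b - a) * (((x - c) / h : ℝ) : ℂ)) * eI (-(x * k))) x := by
    intro x _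
    have h1 : HasDerivAt (fun x : ℝ => (((x - c) / h : ℝ) : ℂ)) ((1 / h : ℝ) : ℂ) x :=
      (((hasDerivAt_id x).sub_const c).div_const h).ofReal_comp
    have h2 := ((((h1.const_mul (b - a)).const_add a).mul_const
      (Complex.I / k)).add_const ((b - a) / (h * k ^ 2))).mul (hasDerivAt_eI k x)
    refine h2.congr_deriv ?_
    push_cast
    field_simp
    linear_combination (-(k * (a * h + (b - a) * (x - c)) * eI (-(x * k)))) * hI
  rw [intervalIntegral.integral_eq_sub_of_hasDerivAt hd]
  · simp only [add_sub_cancel_left, sub_self, zero_div, div_self hh]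
    push_cast
    ring
  · have := continuous_eI_mul k
    exact Continuous.intervalIntegrable (by fun_prop) _ _

lemma sum_dual (N : ℕ) (F : ℤ → ℂ) :
    ∑ n ∈ dual N, F n = ∑ i ∈ Finset.range (2 * N), F ((i : ℤ) - N) := by
  refine Finset.sum_nbij' (fun n => (n + N).toNat) (fun i => (i : ℤ) - N) ?_ ?_ ?_ ?_ ?_
  · intro n hn; simp only [dual, Finset.mem_Icc, Finset.mem_range] at *; omega
  · intro n hn; simp only [dual, Finset.mem_Icc, Finset.mem_range] at *; omega
  · intro n hn; simp only [dual, Finset.mem_Icc] at *; omega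
  · intro n hn; omega
  · intro n hn
    simp only [dual, Finset.mem_Icc] at hn
    congr 1; omega

lemma sum_shift (M : ℕ) (u : ℕ → ℂ) (hu : u M = u 0) :
    ∑ i ∈ Finset.range M, u (i + 1) = ∑ i ∈ Finset.range M, u i := by
  have h1 := Finset.sum_range_succ' u M
  have h2 := Finset.sum_range_succ u M
  rw [h1, hu] at h2
  exact add_right_cancel h2

lemma eI_add_eI_neg (x : ℝ) : eI x + eI (-x) = ((2 * Real.cos x : ℝ) : ℂ) := by
  simp only [eI]
  push_cast
  rw [Complex.cos]
  ring_nf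

/-- On the `n`-th cell the interpolation is the affine function between the two node values. -/
lemma interp_cell {N : ℕ} (hN : 1 ≤ N) (f : ℤ → ℂ) (n : ℤ) {x : ℝ}
    (h1 : msh N * n < x) (h2 : x < msh N * n + msh N) :
    interp N f x = f (red N n) +
      (f (red N (n + 1)) - f (red N n)) * (((x - msh N * n) / msh N : ℝ) : ℂ) := by
  have hp := msh_pos hN
  have : ⌊x / msh N⌋ = n := by
    rw [Int.floor_eq_iff, le_div_iff₀ hp, div_lt_iff₀ hp]
    constructor <;> linarith
  rw [interp, this]

/-- The integral defining the Fourier coefficient of the interpolation: the jumps of `𝓛_h f`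
cancel by periodicity and the jumps of its derivative produce the symbol `2 - 2 cos (hk)`. -/
lemma integral_interp {N : ℕ} (hN : 1 ≤ N) (f : ℤ → ℂ) {k : ℤ} (hk : k ≠ 0) :
    ∫ x in (-π)..π, interp N f x * eI (-(x * k)) =
      (((2 - 2 * Real.cos (msh N * k)) / (msh N * k ^ 2) : ℝ) : ℂ) *
        ∑ n ∈ dual N, f n * eI (-(msh N * n * k)) := by
  have hp := msh_pos hN
  set h := msh N with hh
  have hhN : h * N = π := msh_mul hN
  have hkr : (k : ℝ) ≠ 0 := by exact_mod_cast hk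
  -- nodes, node values and node exponentials, indexed by `0, …, 2N`
  set p : ℕ → ℝ := fun i => h * (((i : ℤ) - N : ℤ) : ℝ) with hpdef
  set v : ℕ → ℂ := fun i => f (red N ((i : ℤ) - N)) with hv
  set E : ℕ → ℂ := fun i => eI (-(p i * k)) with hE
  have hp1 : ∀ i, p (i + 1) = p i + h := by
    intro i; simp only [hpdef]; push_cast; ring
  have hv1 : ∀ i : ℕ, f (red N ((i : ℤ) - N + 1)) = v (i + 1) := by
    intro i; simp only [hv]; push_cast; congr 2; ring
  have hEq : ∀ i, Set.EqOn
      (fun x => (v i + (v (i + 1) - v i) * (((x - p i) / h : ℝ) : ℂ)) * eI (-(x * k)))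
      (fun x => interp N f x * eI (-(x * k))) (Set.uIoo (p i) (p (i + 1))) := by
    intro i x hx
    rw [hp1, Set.uIoo_of_le (by linarith)] at hx
    simp only
    rw [interp_cell hN f ((i : ℤ) - N) hx.1 hx.2, hv1]
  have hcell : ∀ i, ∫ x in (p i)..(p (i + 1)), interp N f x * eI (-(x * k)) =
      Complex.I / k * (v (i + 1) * E (i + 1) - v i * E i) +
        (v (i + 1) - v i) / (h * k ^ 2) * (E (i + 1) - E i) := by
    intro i
    rw [← intervalIntegral.integral_congr_uIoo (hEq i)]
    simp only [hE]
    rw [hp1, cell_integral hp.ne' hkr]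
    push_cast
    rfl
  have hint : ∀ i < 2 * N, IntervalIntegrable (fun x => interp N f x * eI (-(x * k))) volume
      (p i) (p (i + 1)) := by
    intro i _
    have := continuous_eI_mul k
    exact IntervalIntegrable.congr_uIoo
      (Continuous.intervalIntegrable (by fun_prop) _ _) (hEq i)
  have hsum := intervalIntegral.sum_integral_adjacent_intervals hint
  have hp0 : p 0 = -π := by simp [hpdef, hhN]
  have hpN : p (2 * N) = π := by
    simp only [hpdef]; push_cast; rw [← hhN]; ring
  rw [hp0, hpN] at hsum
  rw [← hsum, Finset.sum_congr rfl fun i _ => hcell i]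
  have hvN : v (2 * N) = v 0 := by
    simp only [hv]
    rw [← red_add N (((0 : ℕ) : ℤ) - N)]
    congr 2; push_cast; ring
  have hEN : E (2 * N) = E 0 := by
    simp only [hE]
    have : -(p (2 * N) * k) = -(p 0 * k) + 2 * π * ((-k : ℤ) : ℝ) := by
      rw [hp0, hpN]; push_cast; ring
    rw [this, eI_add, eI_int, mul_one]
  have hEs : ∀ i, E (i + 1) = E i * eI (-(h * k)) := by
    intro i
    simp only [hE]
    rw [hp1, ← eI_add]; congr 1; ring
  have hee : eI (h * k) * eI (-(h * k)) = 1 := by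
    rw [← eI_add]; simp [eI]
  have hS : ∑ n ∈ dual N, f n * eI (-(h * n * k)) =
      ∑ i ∈ Finset.range (2 * N), v i * E i := by
    have : ∑ n ∈ dual N, f n * eI (-(h * n * k)) =
        ∑ n ∈ dual N, f (red N n) * eI (-(h * n * k)) :=
      Finset.sum_congr rfl fun n hn => by rw [red_of_mem hn]
    rw [this, sum_dual]
  have hshift := sum_shift (2 * N) (fun i => v i * E i) (by simp only [hvN, hEN])
  rw [hS]
  set S := ∑ i ∈ Finset.range (2 * N), v i * E i with hSdef
  have hterm : ∀ i, Complex.I / k * (v (i + 1) * E (i + 1) - v i * E i) +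
        (v (i + 1) - v i) / (h * k ^ 2) * (E (i + 1) - E i) =
      (Complex.I / k + 1 / (h * k ^ 2) - eI (h * k) / (h * k ^ 2)) * (v (i + 1) * E (i + 1)) +
      (-(Complex.I / k) + 1 / (h * k ^ 2) - eI (-(h * k)) / (h * k ^ 2)) * (v i * E i) := by
    intro i
    rw [hEs]
    linear_combination (v (i + 1) * E i / (h * k ^ 2)) * hee
  rw [Finset.sum_congr rfl fun i _ => hterm i, Finset.sum_add_distrib, ← Finset.mul_sum,
    ← Finset.mul_sum, hshift]
  have hc := eI_add_eI_neg (h * k)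
  push_cast at hc ⊢
  linear_combination (-S / (h * k ^ 2)) * hc

lemma tF_interp {N : ℕ} (hN : 1 ≤ N) (f : ℤ → ℂ) {k : ℤ} (hk : k ≠ 0) :
    tF (interp N f) k =
      (((2 - 2 * Real.cos (msh N * k)) / (msh N * k) ^ 2 : ℝ) : ℂ) * dF N f k := by
  have hp : (msh N : ℂ) ≠ 0 := by exact_mod_cast (msh_pos hN).ne'
  have hk' : (k : ℂ) ≠ 0 := by exact_mod_cast hk
  rw [tF, integral_interp hN f hk, dF]
  generalize ∑ n ∈ dual N, f n * eI (-(msh N * n * k)) = S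
  push_cast
  field_simp

/-! ### Pointwise bounds and summation over aliases -/

/-- The weight dominating `16 / (hk)⁴` on the alias class `k ∈ j + 2Nm`. -/
def aliasWt (m : ℤ) : ℝ := (if m = 0 then 1 else 0) + 1 / (m : ℝ) ^ 2

lemma aliasWt_nonneg (m : ℤ) : 0 ≤ aliasWt m := by
  unfold aliasWt
  split_ifs <;> positivity

lemma aliasWt_summable : Summable aliasWt := by
  refine Summable.add ?_ (Real.summable_one_div_int_pow.mpr one_lt_two)
  refine summable_of_ne_finset_zero (s := {0}) fun m hm => ?_
  simp only [Finset.mem_singleton] at hm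
  simp [hm]

/-- With `u = (2 - 2 cos (hj)) / 4`, both `u ≤ 1` and `u ≤ (hj)² / 4`; the first gives
`u² ≤ u^s` and the second bounds `u^s`. -/
lemma symb_bound {s : ℝ} (hs0 : 0 ≤ s) (hs1 : s ≤ 1) {h : ℝ} (hh : 0 < h) (j : ℝ) :
    (2 - 2 * Real.cos (h * j)) ^ 2 ≤ 16 * ((h ^ s) ^ 2 * (1 + j ^ 2) ^ s) := by
  set u := (2 - 2 * Real.cos (h * j)) / 4 with hu
  have h0 : 0 ≤ u := by have := Real.cos_le_one (h * j); simp only [hu]; linarith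
  have h1 : u ≤ 1 := by have := Real.neg_one_le_cos (h * j); simp only [hu]; linarith
  have h2 : u ≤ h ^ 2 * (1 + j ^ 2) := by
    have := Real.one_sub_sq_div_two_le_cos (x := h * j)
    simp only [hu]
    nlinarith [sq_nonneg h, sq_nonneg (h * j)]
  have h3 : u ^ 2 ≤ u ^ s := by
    rw [← Real.rpow_natCast u 2]
    exact Real.rpow_le_rpow_of_exponent_ge' h0 h1 hs0 (by push_cast; linarith)
  have h4 : u ^ s ≤ (h ^ s) ^ 2 * (1 + j ^ 2) ^ s := by
    refine (Real.rpow_le_rpow h0 h2 hs0).trans_eq ?_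
    rw [Real.mul_rpow (by positivity) (by positivity), pow_two h,
      Real.mul_rpow hh.le hh.le, ← pow_two (h ^ s)]
  have h5 : (2 - 2 * Real.cos (h * j)) ^ 2 = 16 * u ^ 2 := by simp only [hu]; ring
  rw [h5]
  linarith

lemma wt_bound {N : ℕ} (hN : 1 ≤ N) {k : ℤ} (hk : (N : ℝ) ≤ |(k : ℝ)|) :
    16 / (msh N * k) ^ 4 ≤ aliasWt ((k + N) / (2 * N)) := by
  have hp := msh_pos hN
  set m := (k + N) / (2 * N) with hm
  have hkd := red_decomp N k
  rw [← hm] at hkd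
  have hr := red_mem hN k
  simp only [dual, Finset.mem_Icc] at hr
  have hπ := Real.pi_gt_three
  have hsq : ∀ a : ℝ, 0 ≤ a → a * N ≤ |(k : ℝ)| → 9 * a ^ 2 ≤ (msh N * k) ^ 2 := by
    intro a ha h1
    have h2 : π * a ≤ |msh N * k| := by
      rw [abs_mul, abs_of_pos hp, ← msh_mul hN]
      nlinarith
    rw [← sq_abs (msh N * k)]
    nlinarith [mul_nonneg ha (sub_nonneg.2 hπ.le)]
  have hA : 9 ≤ (msh N * k) ^ 2 := by simpa using hsq 1 (by norm_num) (by linarith)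
  have hpos : 0 < (msh N * k) ^ 4 := by
    rw [show (msh N * k) ^ 4 = ((msh N * k) ^ 2) ^ 2 by ring]; positivity
  have h4 : (msh N * k) ^ 4 = (msh N * k) ^ 2 * (msh N * k) ^ 2 := by ring
  unfold aliasWt
  split_ifs with h0
  · rw [h0]
    simp only [Int.cast_zero]
    rw [div_le_iff₀ hpos, h4]
    norm_num
    nlinarith
  · have hmk : |(m : ℝ)| * N ≤ |(k : ℝ)| := by
      -- `|k| ≥ 2N|m| - N ≥ N|m|` since `|m| ≥ 1`
      have : |m| * (N : ℤ) ≤ |k| := by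
        rcases lt_or_gt_of_ne h0 with h | h
        · rw [abs_of_neg h]
          have : k ≤ m * N := by nlinarith
          exact le_trans (by linarith) (neg_le_abs k)
        · rw [abs_of_pos h]
          have : m * N ≤ k := by nlinarith
          exact this.trans (le_abs_self k)
      exact_mod_cast this
    have hB := hsq |(m : ℝ)| (abs_nonneg _) hmk
    rw [sq_abs] at hB
    have hm0 : (0 : ℝ) < (m : ℝ) ^ 2 := by
      have : (m : ℝ) ≠ 0 := by exact_mod_cast h0
      positivity
    rw [zero_add, div_le_div_iff₀ hpos hm0, h4]
    nlinarith

lemma tF_interp_bound {s : ℝ} (hs0 : 0 ≤ s) (hs1 : s ≤ 1) {N : ℕ} (hN : 1 ≤ N) (f : ℤ → ℂ)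
    {k : ℤ} (hk : (N : ℝ) ≤ |(k : ℝ)|) :
    ‖tF (interp N f) k‖ ^ 2 ≤ aliasWt ((k + N) / (2 * N)) *
      ((msh N ^ s) ^ 2 * ((1 + (red N k : ℝ) ^ 2) ^ s * ‖dF N f (red N k)‖ ^ 2)) := by
  have hp := msh_pos hN
  have hk0 : k ≠ 0 := by
    rintro rfl
    simp at hk
    omega
  have hkr : (k : ℝ) ≠ 0 := by exact_mod_cast hk0
  rw [tF_interp hN f hk0, norm_mul, Complex.norm_real, Real.norm_eq_abs, mul_pow, sq_abs,
    dF_red hN, cos_red hN, div_pow, ← pow_mul]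
  have h1 := symb_bound hs0 hs1 hp (red N k : ℝ)
  have h2 := wt_bound hN hk
  have hpos : 0 < (msh N * k) ^ 4 := by positivity
  set D := ‖dF N f (red N k)‖ ^ 2
  have hD : 0 ≤ D := by positivity
  have hB : 0 ≤ (msh N ^ s) ^ 2 * (1 + (red N k : ℝ) ^ 2) ^ s := by positivity
  calc _ ≤ 16 * ((msh N ^ s) ^ 2 * (1 + (red N k : ℝ) ^ 2) ^ s) / (msh N * k) ^ (2 * 2) * D := by
        gcongr
    _ = 16 / (msh N * k) ^ 4 * ((msh N ^ s) ^ 2 * (1 + (red N k : ℝ) ^ 2) ^ s) * D := by ring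
    _ ≤ aliasWt ((k + N) / (2 * N)) * ((msh N ^ s) ^ 2 * (1 + (red N k : ℝ) ^ 2) ^ s) * D := by
        gcongr
    _ = _ := by ring

/-- Summing the pointwise bound over `k ↔ (m, j)`, where `k = j + 2Nm`. -/
lemma interp_bound {s : ℝ} (hs0 : 0 ≤ s) (hs1 : s ≤ 1) {N : ℕ} (hN : 1 ≤ N) (f : ℤ → ℂ) :
    ∑' k : ℤ, ENNReal.ofReal ({k : ℤ | (N : ℝ) ≤ |(k : ℝ)|}.indicator
        (fun j => ‖tF (interp N f) j‖ ^ 2) k) ≤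
      ENNReal.ofReal ((∑' m, aliasWt m) * ((msh N ^ s) ^ 2 * Hs N s f ^ 2)) := by
  set b : ℤ → ℝ := fun j => (msh N ^ s) ^ 2 * ((1 + (j : ℝ) ^ 2) ^ s * ‖dF N f j‖ ^ 2) with hb
  have hb0 : ∀ j, 0 ≤ b j := fun j => by positivity
  set B : ℤ → ℝ≥0∞ := fun j => if j ∈ dual N then ENNReal.ofReal (b j) else 0 with hB
  set G : ℤ × ℤ → ℝ≥0∞ := fun q => ENNReal.ofReal (aliasWt q.1) * B q.2 with hG
  set φ : ℤ → ℤ × ℤ := fun k => ((k + N) / (2 * N), red N k) with hφ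
  have hinj : Function.Injective φ := by
    intro k l hkl
    simp only [hφ, Prod.mk.injEq] at hkl
    rw [red_decomp N k, red_decomp N l, hkl.1, hkl.2]
  have hBsum : ∑' j, B j = ENNReal.ofReal ((msh N ^ s) ^ 2 * Hs N s f ^ 2) := by
    rw [tsum_eq_sum (s := dual N) (fun j hj => by simp only [hB]; rw [if_neg hj]),
      Finset.sum_congr rfl (fun j hj => by simp only [hB]; rw [if_pos hj]),
      ← ENNReal.ofReal_sum_of_nonneg (fun j _ => hb0 j), Hs, Real.sq_sqrt
        (Finset.sum_nonneg fun j _ => by positivity), Finset.mul_sum]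
  calc _ ≤ ∑' k, G (φ k) := by
        refine ENNReal.tsum_le_tsum fun k => ?_
        simp only [hG, hφ, hB, if_pos (red_mem hN k)]
        rw [← ENNReal.ofReal_mul (aliasWt_nonneg _)]
        refine ENNReal.ofReal_le_ofReal ?_
        refine Set.indicator_apply_le' (fun hk => tF_interp_bound hs0 hs1 hN f hk) fun _ =>
          mul_nonneg (aliasWt_nonneg _) (hb0 _)
    _ ≤ ∑' q, G q := ENNReal.tsum_comp_le_tsum_of_injective hinj G
    _ = (∑' m, ENNReal.ofReal (aliasWt m)) * ∑' j, B j := by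
        rw [ENNReal.tsum_prod']
        simp only [hG, ENNReal.tsum_mul_left, ENNReal.tsum_mul_right]
    _ = _ := by
        rw [hBsum, ← ENNReal.ofReal_tsum_of_nonneg aliasWt_nonneg aliasWt_summable,
          ENNReal.ofReal_mul (tsum_nonneg aliasWt_nonneg)]

lemma high_weight {s : ℝ} (hs0 : 0 ≤ s) {N : ℕ} (hN : 1 ≤ N) {k : ℤ}
    (hk : (N : ℝ) ≤ |(k : ℝ)|) : 1 ≤ (msh N ^ s) ^ 2 * (1 + (k : ℝ) ^ 2) ^ s := by
  have hp := msh_pos hN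
  have h1 : 1 ≤ msh N ^ 2 * (1 + (k : ℝ) ^ 2) := by
    have h2 : π ≤ msh N * |(k : ℝ)| := by rw [← msh_mul hN]; gcongr
    have h3 : (msh N * |(k : ℝ)|) ^ 2 = msh N ^ 2 * (k : ℝ) ^ 2 := by rw [mul_pow, sq_abs]
    nlinarith [Real.pi_gt_three, sq_nonneg (msh N)]
  have h4 := Real.one_le_rpow h1 hs0
  rwa [Real.mul_rpow (by positivity) (by positivity), pow_two (msh N),
    Real.mul_rpow hp.le hp.le, ← pow_two] at h4

/-- high-frequency projection bounds. -/
theorem highfreq_projection (s : ℝ) (hs0 : 0 ≤ s) (hs1 : s ≤ 1) :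
    ∃ C : ℝ, 0 < C ∧ ∀ N : ℕ, 1 ≤ N → msh N ≤ 1 →
      (∀ f : ℤ → ℝ,
        L2Tproj {k : ℤ | Real.pi / msh N ≤ |(k : ℝ)|} (interp N (cf f))
          ≤ ENNReal.ofReal (C * msh N ^ s * Hs N s (cf f))) ∧
      (∀ g : ℝ → ℂ, HsT s g < ⊤ →
        L2Tproj {k : ℤ | Real.pi / msh N ≤ |(k : ℝ)|} g
          ≤ ENNReal.ofReal (C * msh N ^ s) * HsT s g) := by
  set A := ∑' m, aliasWt m with hA
  have hA0 : 0 ≤ A := tsum_nonneg aliasWt_nonneg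
  have hsqrt : ∀ x : ℝ, 0 ≤ x → ENNReal.ofReal (x ^ 2) ^ (1 / 2 : ℝ) = ENNReal.ofReal x := by
    intro x hx
    rw [ENNReal.ofReal_rpow_of_nonneg (by positivity) (by norm_num), ← Real.sqrt_eq_rpow,
      Real.sqrt_sq hx]
  refine ⟨A + 1, by positivity, fun N hN _ => ?_⟩
  have hp := msh_pos hN
  have hπN : π / msh N = N := by
    rw [div_eq_iff hp.ne', mul_comm, msh_mul hN]
  rw [hπN]
  refine ⟨fun f => ?_, fun g _ => ?_⟩
  · have hH : 0 ≤ Hs N s (cf f) := Real.sqrt_nonneg _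
    have hx : 0 ≤ (A + 1) * msh N ^ s * Hs N s (cf f) := by positivity
    rw [← hsqrt _ hx, L2Tproj]
    refine ENNReal.rpow_le_rpow ((interp_bound hs0 hs1 hN (cf f)).trans ?_) (by norm_num)
    refine ENNReal.ofReal_le_ofReal ?_
    rw [mul_pow, mul_pow, mul_assoc]
    gcongr
    nlinarith
  · have hx : 0 ≤ msh N ^ s := by positivity
    have hle : ENNReal.ofReal (msh N ^ s) ≤ ENNReal.ofReal ((A + 1) * msh N ^ s) := by
      refine ENNReal.ofReal_le_ofReal ?_
      nlinarith [mul_nonneg hA0 hx]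
    refine le_trans ?_ (mul_le_mul_left hle _)
    rw [← hsqrt _ hx, L2Tproj, HsT, ← ENNReal.mul_rpow_of_nonneg _ _ (by norm_num)]
    refine ENNReal.rpow_le_rpow ?_ (by norm_num)
    rw [← ENNReal.tsum_mul_left]
    refine ENNReal.tsum_le_tsum fun k => ?_
    rw [← ENNReal.ofReal_mul (by positivity)]
    refine ENNReal.ofReal_le_ofReal (Set.indicator_apply_le' (fun hk => ?_) fun _ => by positivity)
    rw [← mul_assoc]
    exact le_mul_of_one_le_left (by positivity) (high_weight hs0 hN hk)

end FPU

end
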